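/- Let E be a second-countable topological graph and β ∈ ℝ. The pushforward map r_* from the set of β-quasi-invariant regular Borel measures on ∂E to the set of β-sub-invariant regular Borel measures on E⁰ is injective: if ν₁, ν₂ are β-quasi-invariant and r_*ν₁ = r_*ν₂, then ν₁ = ν₂. -/

import Mathlib

/-!
A `β`-quasi-invariant measure `ν` on `∂E` is determined by its values on the cylinders
`Z(V)`, `V ⊆ E^n` Borel (`Zn r s n V` below), and these are determined by the cylinders of
level `0`, whose measures are the values of `r_*ν`.

* The cylinders form a π-system, since cylinders of levels `m ≤ n` meet in a cylinder of level `n`.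
  They generate the Borel σ-algebra (`generateFrom_cylSets`): `∂E` is second countable
  (`sc_bpath`), so the σ-algebra is generated by the defining subbasis of differences
  `Z(U) \ Z(K)`, which are built from countably many cylinders.
* The shift maps `Z(V)`, `V ⊆ E^{n+1}`, onto the cylinder of the shifted set
  (`shift_image_Zn`), a path with singular source staying singular when an edge is prepended. If the
  first edges of `V` lie in an open set on which `s` is injective, quasi-invariance therefore
  expresses `ν(Z(V))` through a cylinder of level `n` (`QuasiInv.Zn_eq`). As `E` is covered by
  countably many such open sets, induction on `n` reduces everything to level `0`
  (`measure_Zn_eq`).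
* Uniqueness of measures on a π-system needs an exhaustion by cylinders of finite measure. The
  cylinder over a compact set of vertices is compact (`isCompact_Zn_zero`), so a regular measure is
  finite on it. For an ultrafilter on such a cylinder, take the truncations that converge along it.
  If all do, their limits form an infinite path; otherwise the longest limit has singular source,
  because over a regular vertex the next edge would stay in a compact set. In both cases this path
  is a limit of the ultrafilter.
-/

open MeasureTheory Set

namespace TopGraph

universe u
variable {V E : Type u} (r s : E → V)

/-- Composability of a tuple of edges: the source of each edge is the range of the next. -/
def Comp (n : ℕ) (a : Fin n → E) : Prop :=
  ∀ i j : Fin n, (j : ℕ) = (i : ℕ) + 1 → s (a i) = r (a j)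

/-- The space `E^n` of paths of length `n`; `E^0` is the vertex space `V`. -/
def PathN : ℕ → Type u
  | 0 => V
  | n + 1 => {a : Fin (n + 1) → E // Comp r s (n + 1) a}

/-- The space `E^∞` of infinite paths. -/
def PathInf : Type u := {a : ℕ → E // ∀ i : ℕ, s (a i) = r (a (i + 1))}

/-- The edges of a finite path. -/
def edgeOf : ∀ {n : ℕ}, PathN r s n → Fin n → E
  | 0, _, i => absurd i.isLt (by omega)
  | _ + 1, q, i => q.1 i

/-- The source of a finite path (for a vertex, the vertex itself). -/
def srcFin : ∀ {n : ℕ}, PathN r s n → V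
  | 0, v => v
  | n + 1, q => s (q.1 ⟨n, Nat.lt_succ_self n⟩)

/-- The range of a finite path (for a vertex, the vertex itself). -/
def rngFin : ∀ {n : ℕ}, PathN r s n → V
  | 0, v => v
  | n + 1, q => r (q.1 ⟨0, Nat.succ_pos n⟩)

/-- Truncation `a ↦ a(n)` of a finite path, with `a(0) = r(a)`. -/
def truncFin : ∀ {m n : ℕ}, n ≤ m → PathN r s m → PathN r s n
  | 0, 0, _, q => q
  | _ + 1, 0, _, q => r (q.1 ⟨0, Nat.succ_pos _⟩)
  | 0, _ + 1, h, _ => absurd h (by omega)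
  | _ + 1, _ + 1, h, q =>
    ⟨fun i => q.1 (Fin.castLE h i), fun i j hij =>
      q.2 (Fin.castLE h i) (Fin.castLE h j) (by simpa using hij)⟩

/-- Truncation `a ↦ a(n)` of an infinite path. -/
def truncInf (a : PathInf r s) : ∀ n : ℕ, PathN r s n
  | 0 => r (a.1 0)
  | n + 1 => ⟨fun i => a.1 i, fun i j hij => by
      show s (a.1 (i : ℕ)) = r (a.1 (j : ℕ))
      rw [hij]
      exact a.2 (i : ℕ)⟩

/-- The finite path space `E* = ⊔ₙ E^n`. -/
def FinPath : Type u := Σ n : ℕ, PathN r s n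

/-- Truncation of a finite path, as a map of `E*`. -/
def ftrunc (p : FinPath r s) (k : ℕ) (h : k ≤ p.1) : FinPath r s :=
  ⟨k, truncFin r s h p.2⟩

section Topology

variable [TopologicalSpace V] [TopologicalSpace E]

instance instTopPathN : ∀ n : ℕ, TopologicalSpace (PathN r s n)
  | 0 => (inferInstance : TopologicalSpace V)
  | n + 1 => (inferInstance : TopologicalSpace {a : Fin (n + 1) → E // Comp r s (n + 1) a})

noncomputable instance instMeasPathN (n : ℕ) : MeasurableSpace (PathN r s n) := borel _

instance instTopPathInf : TopologicalSpace (PathInf r s) :=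
  (inferInstance : TopologicalSpace {a : ℕ → E // ∀ i : ℕ, s (a i) = r (a (i + 1))})

instance instTopFinPath : TopologicalSpace (FinPath r s) :=
  (inferInstance : TopologicalSpace (Σ n : ℕ, PathN r s n))

/-- A vertex is regular if it has a relatively compact open neighborhood `U` with
`r⁻¹(cl U)` compact and `r(r⁻¹(U)) = U`. -/
def RegularVertex (v : V) : Prop :=
  ∃ U : Set V, IsOpen U ∧ v ∈ U ∧ IsCompact (closure U) ∧
    IsCompact (r ⁻¹' closure U) ∧ r '' (r ⁻¹' U) = U

/-- The carrier of the boundary path space: finite or infinite paths. -/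
def BPathCarrier : Type u := FinPath r s ⊕ PathInf r s

/-- Length of a (possibly infinite) path, in `ℕ∞`. -/
def blen : BPathCarrier r s → ℕ∞
  | .inl p => (p.1 : ℕ∞)
  | .inr _ => ⊤

/-- Truncation `a ↦ a(n)` of a boundary path, `n ≤ |a|`, valued in `E*`. -/
def btrunc : ∀ (x : BPathCarrier r s) (n : ℕ), (n : ℕ∞) ≤ blen r s x → FinPath r s
  | .inl p, n, h => ftrunc r s p n (by simpa [blen] using h)
  | .inr a, n, _ => ⟨n, truncInf r s a n⟩

/-- The boundary path space `∂E`: singular finite paths together with infinite paths. -/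
def BPath : Type u :=
  {x : BPathCarrier r s //
    ∀ p : FinPath r s, x = Sum.inl p → ¬ RegularVertex r (srcFin r s p.2)}

/-- The cylinder sets `Z(S) = {a ∈ ∂E : a(n) ∈ S for some n ≤ |a|}`. -/
def ZSet (S : Set (FinPath r s)) : Set (BPath r s) :=
  {x | ∃ (n : ℕ) (h : (n : ℕ∞) ≤ blen r s x.val), btrunc r s x.val n h ∈ S}

/-- The topology on `∂E` generated by the base `{Z(U) \ Z(K) : U open, K compact}`. -/
instance instTopBPath : TopologicalSpace (BPath r s) :=
  TopologicalSpace.generateFrom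
    {A | ∃ (U K : Set (FinPath r s)), IsOpen U ∧ IsCompact K ∧
      A = ZSet r s U \ ZSet r s K}

noncomputable instance instMeasBPath : MeasurableSpace (BPath r s) := borel _

end Topology

/-- The backwards shift on finite paths (acting as the identity on vertices). -/
def shiftF : FinPath r s → FinPath r s
  | ⟨0, v⟩ => ⟨0, v⟩
  | ⟨1, q⟩ => ⟨0, (s (q.1 ⟨0, Nat.one_pos⟩) : PathN r s 0)⟩
  | ⟨n + 2, q⟩ =>
    ⟨n + 1, ⟨fun i => q.1 i.succ, fun i j hij =>
      q.2 i.succ j.succ (by simp [Fin.val_succ, hij])⟩⟩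

/-- The backwards shift on the boundary path carrier. -/
def shiftC : BPathCarrier r s → BPathCarrier r s
  | .inl p => .inl (shiftF r s p)
  | .inr a => .inr ⟨fun i => a.1 (i + 1), fun i => a.2 (i + 1)⟩

section Vertex

variable [TopologicalSpace V] [TopologicalSpace E]

/-- The set of vertices `E⁰ ⊆ ∂E`. -/
def VtxSet : Set (BPath r s) := {x | ∃ v : V, x.val = Sum.inl ⟨0, (v : PathN r s 0)⟩}

/-- The range map `r : ∂E → E⁰`. -/
def brng (x : BPath r s) : V :=
  match x.val with
  | .inl p => rngFin r s p.2
  | .inr a => r (a.1 0)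

end Vertex

section Measures

variable [TopologicalSpace V] [TopologicalSpace E]
variable [MeasurableSpace V] [MeasurableSpace E]

/-- `ν` is the (sheaf-theoretic) pullback of `μ` along `f`. -/
def IsPullback {X Y : Type*} [TopologicalSpace X] [TopologicalSpace Y]
    [MeasurableSpace X] [MeasurableSpace Y] (f : X → Y)
    (ν : Measure X) (μ : Measure Y) : Prop :=
  ∀ U : Set X, IsOpen U → Set.InjOn f U →
    ∀ B : Set X, B ⊆ U → MeasurableSet B → ν B = μ (f '' B)

/-- A measure `ν` on `∂E` is `β`-quasi-invariant: `σ*ν = e^β ν` on `∂E \ E⁰`, i.e.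
`ν(B) = e^{-β} ν(σ(B))` for Borel `B` inside an open set `U ⊆ ∂E \ E⁰` on which `σ`
is injective. -/
def QuasiInv (β : ℝ) (ν : Measure (BPath r s)) : Prop :=
  ∀ U : Set (BPath r s), IsOpen U → Disjoint U (VtxSet r s) →
    Set.InjOn (fun x : BPath r s => shiftC r s x.val) U →
    ∀ B : Set (BPath r s), B ⊆ U → MeasurableSet B →
      ν B = ENNReal.ofReal (Real.exp (-β)) *
        ν (Subtype.val ⁻¹' (shiftC r s '' (Subtype.val '' B)))

/-- A regular Borel measure `μ` on `E⁰` is `β`-sub-invariant: `Tμ ≤ e^β μ` with equality on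
the regular vertices, where `T = r_* s*`. -/
def SubInv (β : ℝ) (μ : Measure V) : Prop :=
  μ.Regular ∧ ∃ sμ : Measure E, sμ.Regular ∧ IsPullback s sμ μ ∧
    Measure.map r sμ ≤ ENNReal.ofReal (Real.exp β) • μ ∧
    ∀ B : Set V, MeasurableSet B → (∀ v ∈ B, RegularVertex r v) →
      Measure.map r sμ B = ENNReal.ofReal (Real.exp β) * μ B

end Measures

section BPathN

variable [TopologicalSpace V] [TopologicalSpace E]

/-- The `n`-th boundary path space `∂Eₙ = E⁰_sng ⊔ ⋯ ⊔ E^{n-1}_sng ⊔ E^n`. -/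
def BPathN (n : ℕ) : Type u :=
  {p : FinPath r s // p.1 ≤ n ∧ (p.1 < n → ¬ RegularVertex r (srcFin r s p.2))}

/-- Cylinder sets in `∂Eₙ`. -/
def ZNSet (n : ℕ) (S : Set (FinPath r s)) : Set (BPathN r s n) :=
  {x | ∃ (k : ℕ) (h : k ≤ x.val.1), ftrunc r s x.val k h ∈ S}

instance instTopBPathN (n : ℕ) : TopologicalSpace (BPathN r s n) :=
  TopologicalSpace.generateFrom
    {A | ∃ (U K : Set (FinPath r s)), IsOpen U ∧ IsCompact K ∧
      A = ZNSet r s n U \ ZNSet r s n K}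

noncomputable instance instMeasBPathN (n : ℕ) : MeasurableSpace (BPathN r s n) := borel _

/-- The map `ρₙ : ∂Eₙ₊₁ → ∂Eₙ`, truncating paths of length `n+1` and fixing shorter paths. -/
def rho (n : ℕ) (x : BPathN r s (n + 1)) : BPathN r s n :=
  if h : x.val.1 = n + 1 then
    ⟨ftrunc r s x.val n (by omega), ⟨le_refl n, fun hlt => absurd hlt (lt_irrefl n)⟩⟩
  else
    ⟨x.val, ⟨by have := x.property.1; omega, fun hlt => x.property.2 (by omega)⟩⟩

end BPathN

/-- The periodicity group of a boundary path. -/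
def Per (x : BPathCarrier r s) : Set ℤ :=
  {z | ∃ k l : ℕ, (k : ℕ∞) ≤ blen r s x ∧ (l : ℕ∞) ≤ blen r s x ∧
    z = (k : ℤ) - (l : ℤ) ∧ (shiftC r s)^[k] x = (shiftC r s)^[l] x}

section Gpd

variable [TopologicalSpace V] [TopologicalSpace E]

/-- The graph groupoid `𝒢_E`, as a set of triples. -/
def GraphGpd : Set (BPath r s × ℤ × BPath r s) :=
  {t | ∃ k l : ℕ, (k : ℕ∞) ≤ blen r s t.1.val ∧ (l : ℕ∞) ≤ blen r s t.2.2.val ∧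
    t.2.1 = (k : ℤ) - (l : ℤ) ∧ (shiftC r s)^[k] t.1.val = (shiftC r s)^[l] t.2.2.val}

end Gpd

/-- The infinite path `c^∞` obtained by repeating a cycle `c`. -/
def cycInf {m : ℕ} (c : PathN r s (m + 1)) (hc : rngFin r s c = srcFin r s c) :
    PathInf r s :=
  ⟨fun i => c.1 ⟨i % (m + 1), Nat.mod_lt i (Nat.succ_pos m)⟩, by
    intro i
    have hlt : i % (m + 1) < m + 1 := Nat.mod_lt i (Nat.succ_pos m)
    show s (c.1 ⟨i % (m + 1), Nat.mod_lt i (Nat.succ_pos m)⟩) =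
      r (c.1 ⟨(i + 1) % (m + 1), Nat.mod_lt (i + 1) (Nat.succ_pos m)⟩)
    by_cases h1 : i % (m + 1) < m
    · have key : (i + 1) % (m + 1) = i % (m + 1) + 1 := by
        conv_lhs => rw [← Nat.div_add_mod i (m + 1)]
        rw [Nat.add_assoc, Nat.mul_add_mod, Nat.mod_eq_of_lt (by omega)]
      exact c.2 _ _ key
    · have h2 : i % (m + 1) = m := by omega
      have key : (i + 1) % (m + 1) = 0 := by
        conv_lhs => rw [← Nat.div_add_mod i (m + 1)]
        rw [Nat.add_assoc, Nat.mul_add_mod, h2, Nat.mod_self]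
      have e1 : (⟨i % (m + 1), Nat.mod_lt i (Nat.succ_pos m)⟩ : Fin (m + 1)) =
          ⟨m, Nat.lt_succ_self m⟩ := Fin.ext h2
      have e2 : (⟨(i + 1) % (m + 1), Nat.mod_lt (i + 1) (Nat.succ_pos m)⟩ : Fin (m + 1)) =
          ⟨0, Nat.succ_pos m⟩ := Fin.ext key
      rw [e1, e2]
      exact hc.symm⟩

/-- Prepending a finite path `b` to an infinite path `d` with `s(b) = r(d)`. -/
def prepend : ∀ {n : ℕ} (b : PathN r s n) (d : PathInf r s),
    srcFin r s b = r (d.1 0) → PathInf r s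
  | 0, _, d, _ => d
  | n + 1, b, d, h =>
    ⟨fun i => if h' : i < n + 1 then b.1 ⟨i, h'⟩ else d.1 (i - (n + 1)), by
      intro i
      show s (if h' : i < n + 1 then b.1 ⟨i, h'⟩ else d.1 (i - (n + 1))) =
        r (if h' : i + 1 < n + 1 then b.1 ⟨i + 1, h'⟩ else d.1 (i + 1 - (n + 1)))
      by_cases h1 : i + 1 < n + 1
      · rw [dif_pos (by omega : i < n + 1), dif_pos h1]
        exact b.2 ⟨i, by omega⟩ ⟨i + 1, h1⟩ rfl
      · by_cases h2 : i < n + 1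
        · rw [dif_pos h2, dif_neg h1]
          have hi : i = n := by omega
          have h0 : i + 1 - (n + 1) = 0 := by omega
          have e : (⟨i, h2⟩ : Fin (n + 1)) = ⟨n, Nat.lt_succ_self n⟩ := Fin.ext hi
          rw [h0, e]
          exact h
        · rw [dif_neg h2, dif_neg h1]
          have h3 : i + 1 - (n + 1) = (i - (n + 1)) + 1 := by omega
          rw [h3]
          exact d.2 (i - (n + 1))⟩

/-- `b` ends with `c`: `b = a·c` for some finite path `a`. -/
def EndsWith {n m : ℕ} (b : PathN r s n) (c : PathN r s m) : Prop :=
  ∃ h : m ≤ n, ∀ i : Fin m,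
    edgeOf r s b ⟨n - m + (i : ℕ), by have := i.isLt; omega⟩ = edgeOf r s c i

/-- `x` is eventually cyclic with cycle of length `m + 1`: `x = b c^∞` for a cycle `c` of
length `m+1` and an exit `b` of `c`. -/
def EvCyclicWitness (x : BPathCarrier r s) (m : ℕ) : Prop :=
  ∃ (c : PathN r s (m + 1)) (hc : rngFin r s c = srcFin r s c)
    (k : ℕ) (b : PathN r s k)
    (hlink : srcFin r s b = r ((cycInf r s c hc).1 0)),
    srcFin r s b = rngFin r s c ∧ ¬ EndsWith r s b c ∧
    x = Sum.inr (prepend r s b (cycInf r s c hc) hlink)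



/-! ### Coordinates of boundary paths -/

/-- The truncation `x(n)` of a boundary path of length at least `n`, as an element of `E^n`
(rather than of `E*`, as for `btrunc`). -/
def tp : ∀ (x : BPathCarrier r s) (n : ℕ), (n : ℕ∞) ≤ blen r s x → PathN r s n
  | .inl p, n, h => truncFin r s (m := p.1) (by simpa [blen] using h) p.2
  | .inr a, n, _ => truncInf r s a n

/-- The shift `E^{n+1} → E^n` deleting the first edge; for `n = 0` it is the source map. -/
def sh : ∀ {n : ℕ}, PathN r s (n + 1) → PathN r s n
  | 0, q => s (q.1 0)
  | _ + 1, q => ⟨fun i => q.1 i.succ, fun i j hij =>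
      q.2 i.succ j.succ (by simp [Fin.val_succ, hij])⟩

lemma btrunc_eq (x : BPathCarrier r s) (n : ℕ) (h : (n : ℕ∞) ≤ blen r s x) :
    btrunc r s x n h = ⟨n, tp r s x n h⟩ := by
  cases x <;> rfl

lemma truncFin_self : ∀ {n : ℕ} (q : PathN r s n), truncFin r s le_rfl q = q
  | 0, _ => rfl
  | _ + 1, _ => rfl

lemma truncFin_tp (x : BPathCarrier r s) {m n : ℕ} (hmn : m ≤ n) (h : (n : ℕ∞) ≤ blen r s x) :
    truncFin r s hmn (tp r s x n h) =
      tp r s x m (le_trans (by exact_mod_cast hmn) h) := by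
  rcases x with ⟨k, p⟩ | a
  · have hk : n ≤ k := by simpa [blen] using h
    match m, n, k, p, hmn, hk with
    | 0, 0, 0, _, _, _ => rfl
    | 0, 0, _ + 1, _, _, _ => rfl
    | 0, _ + 1, _ + 1, _, _, _ => rfl
    | _ + 1, _ + 1, _ + 1, _, _, _ => rfl
  · match m, n, hmn with
    | 0, 0, _ => rfl
    | 0, _ + 1, _ => rfl
    | _ + 1, _ + 1, _ => rfl

variable {r s} in
lemma edgeOf_truncFin_succ {N : ℕ} (q : PathN r s (N + 1)) (i : Fin N) :
    edgeOf r s (truncFin r s N.le_succ q) i = q.1 i.castSucc := by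
  match N, q, i with
  | _ + 1, _, _ => rfl

variable {r s} in
/-- A compatible sequence of finite paths comes from an infinite path. -/
lemma exists_inf (p : ∀ n, PathN r s n)
    (hp : ∀ m n (h : m ≤ n), truncFin r s h (p n) = p m) :
    ∃ a : PathInf r s, ∀ n, truncInf r s a n = p n := by
  have key : ∀ n (i : Fin (n + 1)),
      (p (i + 1)).1 ⟨i, Nat.lt_succ_self _⟩ = (p (n + 1)).1 i := by
    intro n i
    rw [← hp (i + 1) (n + 1) (by omega)]
    rfl
  let a : PathInf r s := ⟨fun i => (p (i + 1)).1 ⟨i, Nat.lt_succ_self _⟩, fun i => by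
    have h := (p (i + 2)).2 ⟨i, by omega⟩ ⟨i + 1, by omega⟩ rfl
    rw [← key (i + 1) ⟨i, by omega⟩] at h
    exact h⟩
  refine ⟨a, fun n => ?_⟩
  match n with
  | 0 => exact hp 0 1 (by omega)
  | n + 1 => exact Subtype.ext (funext fun i => key n i)

/-- The cylinder `{x ∈ ∂E : |x| ≥ n, x(n) ∈ A}` of a set `A ⊆ E^n`. -/
def Zn [TopologicalSpace V] [TopologicalSpace E] (n : ℕ) (A : Set (PathN r s n)) : Set (BPath r s) :=
  {x | ∃ h : (n : ℕ∞) ≤ blen r s x.1, tp r s x.1 n h ∈ A}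

section Top

open scoped Topology

variable [TopologicalSpace V] [TopologicalSpace E]

lemma ZSet_eq (S : Set (FinPath r s)) :
    ZSet r s S = ⋃ n, Zn r s n (Sigma.mk n ⁻¹' S) := by
  ext x
  simp only [ZSet, Zn, mem_iUnion, mem_ofPred_eq, btrunc_eq]
  rfl

lemma Zn_eq (n : ℕ) (A : Set (PathN r s n)) :
    Zn r s n A = ZSet r s (Sigma.mk n '' A) := by
  ext x
  simp only [ZSet, Zn, mem_ofPred_eq, btrunc_eq]
  constructor
  · rintro ⟨h, hA⟩
    exact ⟨n, h, _, hA, rfl⟩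
  · rintro ⟨m, h, p, hA, hp⟩
    cases hp
    exact ⟨h, hA⟩

lemma Zn_mono {n : ℕ} {A B : Set (PathN r s n)} (h : A ⊆ B) : Zn r s n A ⊆ Zn r s n B :=
  fun _ ⟨hx, hA⟩ => ⟨hx, h hA⟩

lemma Zn_empty (n : ℕ) : Zn r s n ∅ = ∅ := by ext x; simp [Zn]

lemma Zn_union (n : ℕ) (A B : Set (PathN r s n)) :
    Zn r s n (A ∪ B) = Zn r s n A ∪ Zn r s n B := by
  ext x
  simp only [Zn, mem_union, mem_ofPred_eq]
  constructor
  · rintro ⟨h, hA | hB⟩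
    exacts [.inl ⟨h, hA⟩, .inr ⟨h, hB⟩]
  · rintro (⟨h, hA⟩ | ⟨h, hB⟩)
    exacts [⟨h, .inl hA⟩, ⟨h, .inr hB⟩]

lemma Zn_inter (n : ℕ) (A B : Set (PathN r s n)) :
    Zn r s n (A ∩ B) = Zn r s n A ∩ Zn r s n B := by
  ext x
  exact ⟨fun ⟨h, hA, hB⟩ => ⟨⟨h, hA⟩, ⟨h, hB⟩⟩, fun ⟨⟨h, hA⟩, ⟨_, hB⟩⟩ => ⟨h, hA, hB⟩⟩

lemma Zn_iUnion {ι : Sort*} (n : ℕ) (A : ι → Set (PathN r s n)) :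
    Zn r s n (⋃ i, A i) = ⋃ i, Zn r s n (A i) := by
  ext x
  simp only [Zn, mem_iUnion, mem_ofPred_eq]
  exact ⟨fun ⟨h, i, hA⟩ => ⟨i, h, hA⟩, fun ⟨i, h, hA⟩ => ⟨h, i, hA⟩⟩

lemma Zn_diff (n : ℕ) (A B : Set (PathN r s n)) :
    Zn r s n (A \ B) = Zn r s n A \ Zn r s n B := by
  ext x
  exact ⟨fun ⟨h, hA, hB⟩ => ⟨⟨h, hA⟩, fun ⟨_, h'⟩ => hB h'⟩,
    fun ⟨⟨h, hA⟩, hB⟩ => ⟨h, hA, fun h' => hB ⟨h, h'⟩⟩⟩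

lemma Zn_zero_univ : Zn r s 0 univ = univ := by
  ext x; simp [Zn]

/-- For `m ≤ n` the intersection of cylinders of levels `m` and `n` is a cylinder of level `n`. -/
lemma Zn_inter_le {m n : ℕ} (hmn : m ≤ n) (A : Set (PathN r s m)) (B : Set (PathN r s n)) :
    Zn r s m A ∩ Zn r s n B = Zn r s n (truncFin r s hmn ⁻¹' A ∩ B) := by
  ext x
  constructor
  · rintro ⟨⟨hm, hA⟩, ⟨hn, hB⟩⟩
    refine ⟨hn, ?_, hB⟩
    rw [mem_preimage, truncFin_tp]
    exact hA
  · rintro ⟨hn, hA, hB⟩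
    rw [mem_preimage, truncFin_tp] at hA
    exact ⟨⟨_, hA⟩, ⟨hn, hB⟩⟩

lemma Zn_trunc_subset {m n : ℕ} (hmn : m ≤ n) (A : Set (PathN r s m)) :
    Zn r s n (truncFin r s hmn ⁻¹' A) ⊆ Zn r s m A := by
  rintro x ⟨hn, hA⟩
  rw [mem_preimage, truncFin_tp] at hA
  exact ⟨_, hA⟩

/-! ### Topology of the finite path spaces -/

lemma continuous_edge (n : ℕ) (i : Fin (n + 1)) :
    Continuous (fun q : PathN r s (n + 1) => q.1 i) :=
  (continuous_apply (A := fun _ : Fin (n + 1) => E) i).comp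
    (continuous_subtype_val (p := Comp r s (n + 1)))

variable {r s}

lemma continuous_truncFin (hr : Continuous r) :
    ∀ {m n : ℕ} (h : n ≤ m), Continuous (truncFin r s h)
  | 0, 0, _ => continuous_id
  | _ + 1, 0, _ => hr.comp (continuous_edge r s _ _)
  | 0, _ + 1, h => absurd h (by omega)
  | _ + 1, _ + 1, _ =>
    Continuous.subtype_mk (continuous_pi fun _ => continuous_edge r s _ _) _

lemma continuous_sh (hs : Continuous s) : ∀ {n : ℕ}, Continuous (sh r s (n := n))
  | 0 => hs.comp (continuous_edge r s _ _)
  | _ + 1 => Continuous.subtype_mk (continuous_pi fun _ => continuous_edge r s _ _) _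

lemma continuous_srcFin (hs : Continuous s) : ∀ {n : ℕ}, Continuous (srcFin r s (n := n))
  | 0 => continuous_id
  | _ + 1 => hs.comp (continuous_edge r s _ _)

lemma isClosed_comp [T2Space V] (hr : Continuous r) (hs : Continuous s) (n : ℕ) :
    IsClosed {a : Fin n → E | Comp r s n a} := by
  simp only [Comp, ofPred_forall]
  refine isClosed_iInter fun i => isClosed_iInter fun j => isClosed_iInter fun _ => ?_
  exact isClosed_eq (hs.comp (continuous_apply i)) (hr.comp (continuous_apply j))

lemma isClosedEmbedding_edges [T2Space V] (hr : Continuous r) (hs : Continuous s) (n : ℕ) :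
    Topology.IsClosedEmbedding
      (fun q : PathN r s (n + 1) => (q.1 : Fin (n + 1) → E)) :=
  (isClosed_comp hr hs (n + 1)).isClosedEmbedding_subtypeVal

variable (r s) in
instance t2_pathN [T2Space V] [T2Space E] : ∀ n : ℕ, T2Space (PathN r s n)
  | 0 => inferInstanceAs (T2Space V)
  | n + 1 => inferInstanceAs (T2Space {a : Fin (n + 1) → E // Comp r s (n + 1) a})

variable (r s) in
instance sc_pathN [SecondCountableTopology V] [SecondCountableTopology E] :
    ∀ n : ℕ, SecondCountableTopology (PathN r s n)
  | 0 => inferInstanceAs (SecondCountableTopology V)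
  | n + 1 =>
    (Topology.IsEmbedding.subtypeVal (p := Comp r s (n + 1))).secondCountableTopology

lemma lc_pathN [T2Space V] [LocallyCompactSpace V] [LocallyCompactSpace E]
    (hr : Continuous r) (hs : Continuous s) : ∀ n : ℕ, LocallyCompactSpace (PathN r s n)
  | 0 => inferInstanceAs (LocallyCompactSpace V)
  | n + 1 => (isClosedEmbedding_edges hr hs n).locallyCompactSpace

instance borel_pathN (n : ℕ) : BorelSpace (PathN r s n) := ⟨rfl⟩

instance borel_bpath : BorelSpace (BPath r s) := ⟨rfl⟩

lemma isOpen_Zn {n : ℕ} {A : Set (PathN r s n)} (hA : IsOpen A) : IsOpen (Zn r s n A) := by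
  refine TopologicalSpace.isOpen_generateFrom_of_mem
    ⟨Sigma.mk n '' A, ∅, isOpenMap_sigmaMk A hA, isCompact_empty, ?_⟩
  have : ZSet r s (∅ : Set (FinPath r s)) = ∅ := by ext x; simp [ZSet]
  rw [this, sdiff_empty, Zn_eq]

lemma isClosed_Zn {n : ℕ} {K : Set (PathN r s n)} (hK : IsCompact K) :
    IsClosed (Zn r s n K) := by
  rw [← isOpen_compl_iff]
  refine TopologicalSpace.isOpen_generateFrom_of_mem
    ⟨univ, Sigma.mk n '' K, isOpen_univ, hK.image continuous_sigmaMk, ?_⟩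
  have : ZSet r s (univ : Set (FinPath r s)) = univ := by
    ext x; simpa [ZSet] using ⟨0, by simp⟩
  rw [this, Zn_eq, compl_eq_univ_sdiff]

lemma measurableSet_Zn {n : ℕ} {A : Set (PathN r s n)} (hA : MeasurableSet A) :
    MeasurableSet (Zn r s n A) := by
  induction A, hA using MeasurableSpace.generateFrom_induction with
  | hC t ht _ => exact (isOpen_Zn ht).measurableSet
  | empty => rw [Zn_empty]; exact MeasurableSet.empty
  | compl t _ ih =>
    rw [compl_eq_univ_sdiff, Zn_diff]
    exact (isOpen_Zn isOpen_univ).measurableSet.diff ih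
  | iUnion f _ ih => rw [Zn_iUnion]; exact MeasurableSet.iUnion ih

lemma brng_preimage (A : Set V) : brng r s ⁻¹' A = Zn r s 0 A := by
  ext ⟨x, hx⟩
  rcases x with ⟨_ | n, p⟩ | a <;>
    exact ⟨fun h => ⟨bot_le, h⟩, fun ⟨_, h⟩ => h⟩

lemma continuous_brng : Continuous (brng r s) := by
  refine continuous_def.2 fun U hU => ?_
  rw [brng_preimage]
  exact isOpen_Zn (n := 0) hU

/-! ### Second countability of `∂E` -/

lemma ZSet_compact {K : Set (FinPath r s)} (hK : IsCompact K) :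
    ∃ (S : Set ℕ) (t : ∀ n, Set (PathN r s n)), S.Finite ∧ (∀ n, IsCompact (t n)) ∧
      ZSet r s K = ⋃ n ∈ S, Zn r s n (t n) := by
  obtain ⟨S, t, hS, ht, rfl⟩ := IsCompact.sigma_exists_finite_sigma_eq K hK
  refine ⟨S, t, hS, ht, ?_⟩
  ext x
  simp only [ZSet, Zn, btrunc_eq, mem_ofPred_eq, mem_iUnion, exists_prop]
  exact ⟨fun ⟨n, h, h1, h2⟩ => ⟨n, h1, h, h2⟩, fun ⟨n, h1, h, h2⟩ => ⟨n, h, h1, h2⟩⟩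

variable (r s) in
/-- A countable subbasis of `∂E`, made of the cylinders of basic open sets of the spaces `E^n`
and the complements of the cylinders of their compact closures. -/
def ctbSub [SecondCountableTopology V] [SecondCountableTopology E] : Set (Set (BPath r s)) :=
  ⋃ n, (Zn r s n '' TopologicalSpace.countableBasis (PathN r s n)) ∪
    ((fun B => (Zn r s n (closure B))ᶜ) ''
      {B | B ∈ TopologicalSpace.countableBasis (PathN r s n) ∧ IsCompact (closure B)})

lemma top_eq_ctbSub [T2Space V] [T2Space E] [LocallyCompactSpace V] [LocallyCompactSpace E]
    [SecondCountableTopology V] [SecondCountableTopology E]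
    (hr : Continuous r) (hs : Continuous s) :
    instTopBPath r s = TopologicalSpace.generateFrom (ctbSub r s) := by
  apply le_antisymm
  · refine le_generateFrom fun A hA => ?_
    obtain ⟨n, ⟨B, hB, rfl⟩ | ⟨B, ⟨_, hBc⟩, rfl⟩⟩ := mem_iUnion.1 hA
    · exact isOpen_Zn (TopologicalSpace.isOpen_of_mem_countableBasis hB)
    · exact (isClosed_Zn hBc).isOpen_compl
  · have hop : ∀ (n : ℕ) (A : Set (PathN r s n)), IsOpen A →
        IsOpen[TopologicalSpace.generateFrom (ctbSub r s)] (Zn r s n A) := by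
      intro n A hA
      obtain ⟨S, hS, rfl⟩ :=
        (TopologicalSpace.isBasis_countableBasis (PathN r s n)).open_eq_sUnion hA
      rw [sUnion_eq_iUnion, Zn_iUnion]
      refine @isOpen_iUnion _ _ (TopologicalSpace.generateFrom (ctbSub r s)) _ fun B => ?_
      exact TopologicalSpace.isOpen_generateFrom_of_mem
        (mem_iUnion.2 ⟨n, .inl ⟨_, hS B.2, rfl⟩⟩)
    have hcl : ∀ (n : ℕ) (K : Set (PathN r s n)), IsCompact K →
        IsClosed[TopologicalSpace.generateFrom (ctbSub r s)] (Zn r s n K) := by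
      intro n K hK
      have := lc_pathN (r := r) (s := s) hr hs n
      rw [← @isOpen_compl_iff _ _ (TopologicalSpace.generateFrom (ctbSub r s)),
        @isOpen_iff_mem_nhds _ (TopologicalSpace.generateFrom (ctbSub r s)) _]
      intro x hx
      -- the point `x` is separated from `Zn K` by finitely many members of the subbasis
      have key : ∃ C, IsClosed[TopologicalSpace.generateFrom (ctbSub r s)] C ∧
          Zn r s n K ⊆ C ∧ x ∉ C := by
        refine hK.induction_on (p := fun A => ∃ C,
          IsClosed[TopologicalSpace.generateFrom (ctbSub r s)] C ∧ Zn r s n A ⊆ C ∧ x ∉ C)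
          ⟨∅, @isClosed_empty _ (TopologicalSpace.generateFrom (ctbSub r s)),
            by rw [Zn_empty], by simp⟩ ?_ ?_ ?_
        · rintro A B hAB ⟨C, hC, hBC, hxC⟩
          exact ⟨C, hC, (Zn_mono r s hAB).trans hBC, hxC⟩
        · rintro A B ⟨C, hC, hBC, hxC⟩ ⟨C', hC', hBC', hxC'⟩
          refine ⟨C ∪ C', @IsClosed.union _ _ _ (TopologicalSpace.generateFrom (ctbSub r s))
            hC hC', ?_, by simp [hxC, hxC']⟩
          rw [Zn_union]
          exact union_subset_union hBC hBC'
        · intro p hp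
          obtain ⟨O, hO, hpO, hxO⟩ : ∃ O : Set (PathN r s n), IsOpen O ∧ p ∈ O ∧
              x ∉ Zn r s n O := by
            by_cases h : (n : ℕ∞) ≤ blen r s x.1
            · refine ⟨{tp r s x.1 n h}ᶜ, isOpen_compl_singleton, ?_, ?_⟩
              · rintro rfl
                exact hx ⟨h, hp⟩
              · rintro ⟨_, h'⟩
                exact h' rfl
            · exact ⟨univ, isOpen_univ, trivial, fun ⟨h', _⟩ => h h'⟩
          obtain ⟨L, hL, hLO, hLc⟩ := local_compact_nhds (hO.mem_nhds hpO)
          obtain ⟨B, hB, hpB, hBL⟩ :=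
            (TopologicalSpace.isBasis_countableBasis (PathN r s n)).mem_nhds_iff.1 hL
          have hBcl : closure B ⊆ L := hLc.isClosed.closure_subset_iff.2 hBL
          have hBc : IsCompact (closure B) := hLc.of_isClosed_subset isClosed_closure hBcl
          refine ⟨B, mem_nhdsWithin_of_mem_nhds
            ((TopologicalSpace.isOpen_of_mem_countableBasis hB).mem_nhds hpB),
            Zn r s n (closure B), ?_, Zn_mono r s subset_closure,
            fun h => hxO (Zn_mono r s (hBcl.trans hLO) h)⟩
          rw [← @isOpen_compl_iff _ _ (TopologicalSpace.generateFrom (ctbSub r s))]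
          exact TopologicalSpace.isOpen_generateFrom_of_mem
            (mem_iUnion.2 ⟨n, .inr ⟨B, ⟨hB, hBc⟩, rfl⟩⟩)
      obtain ⟨C, hC, hKC, hxC⟩ := key
      have hCo := @IsClosed.isOpen_compl _ (TopologicalSpace.generateFrom (ctbSub r s)) _ hC
      exact Filter.mem_of_superset
        (@IsOpen.mem_nhds _ (TopologicalSpace.generateFrom (ctbSub r s)) _ _ hCo hxC)
        (compl_subset_compl.2 hKC)
    refine le_generateFrom ?_
    rintro A ⟨U, K, hU, hK, rfl⟩
    refine @IsOpen.sdiff _ _ _ (TopologicalSpace.generateFrom (ctbSub r s)) ?_ ?_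
    · rw [ZSet_eq]
      exact @isOpen_iUnion _ _ (TopologicalSpace.generateFrom (ctbSub r s)) _
        fun n => hop n _ (isOpen_sigma_iff.1 hU n)
    · obtain ⟨S, t, hS, ht, h⟩ := ZSet_compact hK
      rw [h]
      exact @Set.Finite.isClosed_biUnion _ _ (TopologicalSpace.generateFrom (ctbSub r s)) _ _
        hS fun n _ => hcl n _ (ht n)

lemma sc_bpath [T2Space V] [T2Space E] [LocallyCompactSpace V] [LocallyCompactSpace E]
    [SecondCountableTopology V] [SecondCountableTopology E]
    (hr : Continuous r) (hs : Continuous s) : SecondCountableTopology (BPath r s) := by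
  refine ⟨⟨ctbSub r s, countable_iUnion fun n => ?_, top_eq_ctbSub hr hs⟩⟩
  have := TopologicalSpace.countable_countableBasis (PathN r s n)
  exact (this.image _).union ((this.mono fun _ h => h.1).image _)

/-! ### Compactness of cylinders over compact sets of vertices -/

/-- `x(n)` is defined for `F`-almost all `x` and converges to `p` along `F`. -/
def Conv (F : Ultrafilter (BPath r s)) (n : ℕ) (p : PathN r s n) : Prop :=
  ∀ O : Set (PathN r s n), IsOpen O → p ∈ O → Zn r s n O ∈ F

lemma Conv.trunc (hr : Continuous r) {F : Ultrafilter (BPath r s)} {m n : ℕ} (hmn : m ≤ n)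
    {p : PathN r s n} (h : Conv F n p) : Conv F m (truncFin r s hmn p) := fun O hO hp =>
  Filter.mem_of_superset (h _ (hO.preimage (continuous_truncFin hr hmn)) hp)
    (Zn_trunc_subset r s hmn O)

lemma Conv.unique [T2Space V] [T2Space E] {F : Ultrafilter (BPath r s)} {n : ℕ}
    {p q : PathN r s n} (hp : Conv F n p) (hq : Conv F n q) : p = q := by
  by_contra hne
  obtain ⟨A, B, hA, hB, hpA, hqB, hAB⟩ := t2_separation hne
  have := Filter.inter_mem (hp A hA hpA) (hq B hB hqB)
  rw [← Zn_inter, hAB.inter_eq, Zn_empty] at this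
  exact F.empty_notMem this

lemma Conv.of_compact {F : Ultrafilter (BPath r s)} {n : ℕ} {K : Set (PathN r s n)}
    (hK : IsCompact K) (hF : Zn r s n K ∈ F) : ∃ p ∈ K, Conv F n p := by
  by_contra! hcon
  refine hK.induction_on (p := fun A => Zn r s n A ∉ F) ?_ ?_ ?_ ?_ hF
  · rw [Zn_empty]
    exact F.empty_notMem
  · exact fun A B hAB hB hA => hB (Filter.mem_of_superset hA (Zn_mono r s hAB))
  · intro A B hA hB h
    rw [Zn_union] at h
    exact (Ultrafilter.union_mem_iff.1 h).elim hA hB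
  · intro p hp
    have h := hcon p hp
    simp only [Conv, not_forall] at h
    obtain ⟨O, hO, hpO, h⟩ := h
    exact ⟨O, mem_nhdsWithin_of_mem_nhds (hO.mem_nhds hpO), h⟩

/-- A boundary path whose `N`-th truncation has a regular source is strictly longer than `N`. -/
lemma exists_next (x : BPath r s) (N : ℕ) (h : (N : ℕ∞) ≤ blen r s x.1)
    (hreg : RegularVertex r (srcFin r s (tp r s x.1 N h))) :
    ∃ h' : ((N + 1 : ℕ) : ℕ∞) ≤ blen r s x.1,
      r ((tp r s x.1 (N + 1) h').1 ⟨N, N.lt_succ_self⟩) = srcFin r s (tp r s x.1 N h) := by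
  obtain ⟨⟨k, p⟩ | a, hx⟩ := x
  · have hk : N ≤ k := by simpa [blen] using h
    rcases hk.lt_or_eq with hlt | rfl
    · refine ⟨Nat.cast_le.2 hlt, ?_⟩
      match N, k, p, hlt with
      | 0, _ + 1, _, _ => rfl
      | N + 1, k + 1, p, hlt =>
        exact (p.2 ⟨N, by omega⟩ ⟨N + 1, by omega⟩ rfl).symm
    · have : tp r s (Sum.inl ⟨N, p⟩) N h = p := truncFin_self r s p
      exact absurd (this ▸ hreg) (hx ⟨N, p⟩ rfl)
  · refine ⟨le_top, ?_⟩
    match N with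
    | 0 => rfl
    | N + 1 => exact (a.2 N).symm

/-- If the last limit `p` of an ultrafilter had a regular source, the next truncation would
converge too. -/
lemma Conv.singular [T2Space V] [LocallyCompactSpace E] (hr : Continuous r) (hs : Continuous s)
    {F : Ultrafilter (BPath r s)} {N : ℕ} {p : PathN r s N} (hp : Conv F N p)
    (hN : ∀ q, ¬ Conv F (N + 1) q) : ¬ RegularVertex r (srcFin r s p) := by
  rintro ⟨U, hU, hpU, hUc, hrU, hUr⟩
  have hreg : ∀ v ∈ U, RegularVertex r v := fun v hv => ⟨U, hU, hv, hUc, hrU, hUr⟩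
  choose L hLc hL using fun i : Fin N => exists_compact_mem_nhds (edgeOf r s p i)
  have hcont : ∀ i : Fin N, Continuous fun q : PathN r s N => edgeOf r s q i := by
    match N with
    | 0 => exact fun i => i.elim0
    | N + 1 => exact fun i => continuous_edge r s N i
  let O : Set (PathN r s N) :=
    {q | srcFin r s q ∈ U} ∩ ⋂ i, (fun q => edgeOf r s q i) ⁻¹' interior (L i)
  have hO : IsOpen O := (hU.preimage (continuous_srcFin hs)).inter
    (isOpen_iInter_of_finite fun i => isOpen_interior.preimage (hcont i))
  have hpO : p ∈ O := ⟨hpU, mem_iInter.2 fun i => mem_interior_iff_mem_nhds.2 (hL i)⟩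
  let K : Fin (N + 1) → Set E := Fin.snoc (α := fun _ => Set E) L (r ⁻¹' closure U)
  have hK : ∀ i, IsCompact (K i) := by
    intro i
    refine Fin.lastCases ?_ (fun i => ?_) i
    · simpa [K] using hrU
    · simpa [K] using hLc i
  have hC : IsCompact {q : PathN r s (N + 1) | ∀ i, q.1 i ∈ K i} := by
    have := (isClosedEmbedding_edges hr hs N).isCompact_preimage
      (isCompact_univ_pi hK)
    convert this using 1
    ext q
    simp
  have hsub : Zn r s N O ⊆ Zn r s (N + 1) {q : PathN r s (N + 1) | ∀ i, q.1 i ∈ K i} := by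
    rintro x ⟨h, hxU, hxL⟩
    obtain ⟨h', hlast⟩ := exists_next x N h (hreg _ hxU)
    refine ⟨h', fun i => ?_⟩
    refine Fin.lastCases ?_ (fun i => ?_) i
    · simp only [K, Fin.snoc_last, mem_preimage]
      apply subset_closure
      exact hlast.symm ▸ (show srcFin r s (tp r s x.1 N h) ∈ U from hxU)
    · simp only [K, Fin.snoc_castSucc]
      have h1 := interior_subset (mem_iInter.1 hxL i)
      rw [← truncFin_tp r s x.1 N.le_succ h'] at h1
      exact edgeOf_truncFin_succ (tp r s x.1 (N + 1) h') i ▸ h1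
  obtain ⟨q, -, hq⟩ := Conv.of_compact hC (Filter.mem_of_superset (hp O hO hpO) hsub)
  exact hN q hq

/-- A boundary path whose truncations are exactly the limits of the truncations along `F` is a
limit of `F`. -/
lemma le_nhds_of_conv {F : Ultrafilter (BPath r s)} (x : BPath r s)
    (h1 : ∀ n h, Conv F n (tp r s x.1 n h))
    (h2 : ∀ n p, Conv F n p → ∃ h, tp r s x.1 n h = p) : (F : Filter (BPath r s)) ≤ nhds x := by
  rw [TopologicalSpace.nhds_generateFrom]
  refine le_iInf₂ fun A hA => ?_
  obtain ⟨hxA, U, K, hU, hK, rfl⟩ := hA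
  rw [Filter.le_principal_iff]
  refine Filter.inter_mem ?_ ?_
  · rw [ZSet_eq] at hxA ⊢
    obtain ⟨n, h, hn⟩ := mem_iUnion.1 hxA.1
    exact Filter.mem_of_superset (h1 n h _ (isOpen_sigma_iff.1 hU n) hn)
      (subset_iUnion (fun n => Zn r s n (Sigma.mk n ⁻¹' U)) n)
  · obtain ⟨S, t, hS, ht, hZ⟩ := ZSet_compact hK
    have hxK := hxA.2
    rw [hZ] at hxK ⊢
    refine Ultrafilter.compl_mem_iff_notMem.2 fun hF => ?_
    obtain ⟨n, hnS, hn⟩ := (Ultrafilter.finite_biUnion_mem_iff hS).1 hF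
    obtain ⟨p, hp, hpc⟩ := Conv.of_compact (ht n) hn
    obtain ⟨h, rfl⟩ := h2 n p hpc
    exact hxK (mem_biUnion hnS ⟨h, hp⟩)

/-- The cylinder over a compact set of vertices is compact: along an ultrafilter, either all
truncations converge, to those of an infinite path, or the longest limit has singular source. -/
lemma isCompact_Zn_zero [T2Space V] [T2Space E] [LocallyCompactSpace E]
    (hr : Continuous r) (hs : Continuous s) {K : Set (PathN r s 0)} (hK : IsCompact K) :
    IsCompact (Zn r s 0 K) := by
  rw [isCompact_iff_ultrafilter_le_nhds]
  intro F hF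
  obtain ⟨p0, hp0, hc0⟩ := Conv.of_compact hK (Filter.le_principal_iff.1 hF)
  by_cases hall : ∀ n, ∃ p, Conv F n p
  · choose p hp using hall
    obtain ⟨a, ha⟩ := exists_inf p fun m n h => ((hp n).trunc hr h).unique (hp m)
    refine ⟨⟨Sum.inr a, fun _ h => by cases h⟩, ⟨bot_le, ?_⟩, le_nhds_of_conv _ ?_ ?_⟩
    · change truncInf r s a 0 ∈ K
      rw [ha, (hp 0).unique hc0]
      exact hp0
    · intro n _
      change Conv F n (truncInf r s a n)
      rw [ha]
      exact hp n
    · intro n q hq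
      exact ⟨le_top, (ha n).trans ((hp n).unique hq)⟩
  · classical
    have hall' : ∃ n, ¬ ∃ p, Conv F n p := not_forall.1 hall
    obtain ⟨N, hN⟩ : ∃ N, Nat.find hall' = N + 1 :=
      Nat.exists_eq_succ_of_ne_zero fun h0 => (h0 ▸ Nat.find_spec hall') ⟨p0, hc0⟩
    have hfail : ∀ q, ¬ Conv F (N + 1) q := not_exists.1 (hN ▸ Nat.find_spec hall')
    obtain ⟨p, hp⟩ : ∃ p, Conv F N p :=
      not_not.1 (Nat.find_min hall' (show N < Nat.find hall' by omega))
    refine ⟨⟨Sum.inl ⟨N, p⟩, ?_⟩, ⟨bot_le, ?_⟩, le_nhds_of_conv _ ?_ ?_⟩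
    · rintro _ h
      cases h
      exact hp.singular hr hs hfail
    · change truncFin r s (Nat.zero_le N) p ∈ K
      rw [(hp.trunc hr (Nat.zero_le N)).unique hc0]
      exact hp0
    · intro n h
      exact hp.trunc hr _
    · intro n q hq
      have hn : n ≤ N := by
        by_contra hlt
        exact hfail _ (hq.trunc hr (show N + 1 ≤ n by omega))
      exact ⟨by simpa [blen] using hn, (hp.trunc hr hn).unique hq⟩

end Top

/-! ### The shift and cylinders -/

section Shift

variable {r s}

lemma shiftF_succ : ∀ {n : ℕ} (q : PathN r s (n + 1)), shiftF r s ⟨n + 1, q⟩ = ⟨n, sh r s q⟩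
  | 0, _ => rfl
  | _ + 1, _ => rfl

lemma shiftC_succ {n : ℕ} (q : PathN r s (n + 1)) :
    shiftC r s (Sum.inl ⟨n + 1, q⟩) = Sum.inl ⟨n, sh r s q⟩ :=
  congrArg Sum.inl (shiftF_succ q)

lemma tp_congr {x y : BPathCarrier r s} (h : x = y) (n : ℕ) (hx : (n : ℕ∞) ≤ blen r s x)
    (hy : (n : ℕ∞) ≤ blen r s y) : tp r s x n hx = tp r s y n hy := by
  subst h
  rfl

lemma srcFin_sh : ∀ {n : ℕ} (q : PathN r s (n + 1)), srcFin r s (sh r s q) = srcFin r s q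
  | 0, _ => rfl
  | _ + 1, _ => rfl

lemma truncFin_zero_sh : ∀ {n : ℕ} (q : PathN r s (n + 1)),
    truncFin r s (Nat.zero_le n) (sh r s q) = s (q.1 0)
  | 0, _ => rfl
  | _ + 1, q => (q.2 0 1 rfl).symm

lemma path_ext : ∀ {n : ℕ} {q q' : PathN r s (n + 1)}, q.1 0 = q'.1 0 → sh r s q = sh r s q' →
    q = q'
  | 0, _, _, h, _ => Subtype.ext (funext fun i => by rw [Fin.fin_one_eq_zero i]; exact h)
  | _ + 1, _, _, h, h' => Subtype.ext (funext fun i =>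
      Fin.cases h (fun i => congrFun (congrArg Subtype.val h') i) i)

/-- Prepending an edge to a finite path. -/
def consF (e : E) : ∀ {n : ℕ} (p : PathN r s n),
    s e = truncFin r s (Nat.zero_le n) p → PathN r s (n + 1)
  | 0, _, _ => ⟨fun _ => e, fun i j h => by
      have h1 : (j : ℕ) < 1 := j.isLt
      omega⟩
  | n + 1, p, h => ⟨Fin.cons (α := fun _ => E) e p.1, by
      intro i j hij
      obtain ⟨j, rfl⟩ := Fin.exists_succ_eq.2 (show j ≠ 0 by rintro rfl; simp at hij)
      revert hij
      refine Fin.cases ?_ (fun i => ?_) i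
      · intro hij
        have : j = 0 := Fin.ext (by simpa using hij)
        subst this
        exact h
      · intro hij
        exact p.2 i j (by simpa using hij)⟩

lemma consF_zero (e : E) : ∀ {n : ℕ} (p : PathN r s n) (h), (consF e p h).1 0 = e
  | 0, _, _ => rfl
  | _ + 1, _, _ => rfl

lemma sh_consF (e : E) : ∀ {n : ℕ} (p : PathN r s n) (h), sh r s (consF e p h) = p
  | 0, _, h => h
  | _ + 1, _, _ => rfl

lemma le_blen_shiftC {x : BPathCarrier r s} {n : ℕ} (h : ((n + 1 : ℕ) : ℕ∞) ≤ blen r s x) :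
    (n : ℕ∞) ≤ blen r s (shiftC r s x) := by
  rcases x with ⟨k, p⟩ | a
  · have hk : n + 1 ≤ k := Nat.cast_le.1 h
    match k, p, hk with
    | k + 1, p, hk =>
      rw [shiftC_succ]
      exact Nat.cast_le.2 (Nat.le_of_succ_le_succ hk)
  · exact le_top

lemma tp_shiftC {x : BPathCarrier r s} {n : ℕ} (h : ((n + 1 : ℕ) : ℕ∞) ≤ blen r s x) :
    tp r s (shiftC r s x) n (le_blen_shiftC h) = sh r s (tp r s x (n + 1) h) := by
  rcases x with ⟨k, p⟩ | a
  · have hk : n + 1 ≤ k := Nat.cast_le.1 h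
    match n, k, p, hk with
    | 0, 1, p, _ => rfl
    | 0, k + 2, p, _ => exact (p.2 0 1 rfl).symm
    | n + 1, k + 2, p, hk => rfl
  · match n with
    | 0 => exact (a.2 0).symm
    | n + 1 => rfl

/-- A path of positive length is determined by its first edge and its shift. -/
lemma shiftC_inj {x y : BPathCarrier r s} (hx : ((1 : ℕ) : ℕ∞) ≤ blen r s x)
    (hy : ((1 : ℕ) : ℕ∞) ≤ blen r s y) (h0 : (tp r s x 1 hx).1 0 = (tp r s y 1 hy).1 0)
    (h : shiftC r s x = shiftC r s y) : x = y := by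
  rcases x with ⟨k, p⟩ | a <;> rcases y with ⟨l, q⟩ | b
  · have hk : 1 ≤ k := Nat.cast_le.1 hx
    have hl : 1 ≤ l := Nat.cast_le.1 hy
    obtain ⟨k, rfl⟩ := Nat.exists_eq_add_of_le' hk
    obtain ⟨l, rfl⟩ := Nat.exists_eq_add_of_le' hl
    rw [shiftC_succ, shiftC_succ] at h
    have h2 := Sum.inl.inj h
    obtain ⟨rfl, h2⟩ := Sigma.mk.inj_iff.1 h2
    rw [show p = q from path_ext (show p.1 0 = q.1 0 from h0) (eq_of_heq h2)]
  · cases h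
  · cases h
  · have h2 := congrArg Subtype.val (Sum.inr.inj h)
    refine congrArg Sum.inr (Subtype.ext (funext fun i => ?_))
    match i with
    | 0 => exact h0
    | i + 1 => exact congrFun h2 i

/-- Prepending an edge `e` to a path `y` with range `s e`. -/
lemma exists_cons (e : E) (y : BPathCarrier r s) (h : s e = tp r s y 0 bot_le) :
    ∃ x : BPathCarrier r s, shiftC r s x = y ∧
      (∀ n : ℕ, (n : ℕ∞) ≤ blen r s y → ((n + 1 : ℕ) : ℕ∞) ≤ blen r s x) ∧
      (∀ (n : ℕ) (hn : ((n + 1 : ℕ) : ℕ∞) ≤ blen r s x), (tp r s x (n + 1) hn).1 0 = e) ∧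
      ∀ p : FinPath r s, x = Sum.inl p →
        ∃ p' : FinPath r s, y = Sum.inl p' ∧ srcFin r s p'.2 = srcFin r s p.2 := by
  rcases y with ⟨k, p⟩ | a
  · refine ⟨Sum.inl ⟨k + 1, consF e p h⟩, ?_, ?_, ?_, ?_⟩
    · exact (shiftC_succ _).trans (congrArg
        (fun q : PathN r s k => (Sum.inl (⟨k, q⟩ : FinPath r s) : BPathCarrier r s))
        (sh_consF e p h))
    · intro n hn
      have : n ≤ k := Nat.cast_le.1 hn
      exact Nat.cast_le.2 (by simpa using this)
    · intro n hn
      exact consF_zero e p h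
    · intro q hq
      cases hq
      refine ⟨_, rfl, ?_⟩
      exact (congrArg (srcFin r s) (sh_consF e p h)).symm.trans (srcFin_sh _)
  · refine ⟨Sum.inr ⟨fun i => Nat.casesOn i e a.1, fun i => ?_⟩, rfl, fun _ _ => le_top,
      fun _ _ => rfl, fun p hp => by cases hp⟩
    match i with
    | 0 => exact h
    | i + 1 => exact a.2 i

variable [TopologicalSpace V] [TopologicalSpace E]

/-- The shift maps the cylinder of `A ⊆ E^{n+1}` onto the cylinder of the shift of `A`. -/
lemma shift_image_Zn {n : ℕ} (A : Set (PathN r s (n + 1))) :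
    (Subtype.val ⁻¹' (shiftC r s '' (Subtype.val '' Zn r s (n + 1) A)) : Set (BPath r s)) =
      Zn r s n (sh r s '' A) := by
  ext y
  constructor
  · rintro ⟨_, ⟨x, ⟨h, hA⟩, rfl⟩, hxy⟩
    have hn : (n : ℕ∞) ≤ blen r s y.1 := hxy ▸ le_blen_shiftC h
    exact ⟨hn, _, hA, (tp_shiftC h).symm.trans (tp_congr hxy n _ hn)⟩
  · rintro ⟨h, q, hqA, hq⟩
    have h0 : s (q.1 0) = tp r s y.1 0 bot_le :=
      (truncFin_zero_sh q).symm.trans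
        ((congrArg _ hq).trans (truncFin_tp r s y.1 (Nat.zero_le n) h))
    obtain ⟨x, hx, hlen, hfst, hsrc⟩ := exists_cons (q.1 0) y.1 h0
    have hxq : tp r s x (n + 1) (hlen n h) = q := by
      refine path_ext (hfst _ _) ?_
      rw [← tp_shiftC, hq]
      exact tp_congr hx n _ h
    refine ⟨x, ⟨⟨x, fun p hp => ?_⟩, ⟨hlen n h, ?_⟩, rfl⟩, hx⟩
    · obtain ⟨p', hp', hpp⟩ := hsrc p hp
      rw [← hpp]
      exact y.2 p' hp'
    · change tp r s x (n + 1) _ ∈ A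
      rw [hxq]
      exact hqA

end Shift

/-! ### Measures -/

/-- Injective continuous images of Borel sets in σ-compact spaces are Borel: closed sets are
σ-compact, and injectivity makes the class of sets with Borel image a σ-algebra. -/
lemma measurableSet_image_of_sigmaCompact {X Y : Type*} [TopologicalSpace X] [TopologicalSpace Y]
    [MeasurableSpace X] [BorelSpace X] [MeasurableSpace Y] [BorelSpace Y] [SigmaCompactSpace X]
    [T2Space Y] {f : X → Y} (hf : Continuous f) (hinj : Function.Injective f) {A : Set X}
    (hA : MeasurableSet A) : MeasurableSet (f '' A) := by
  have hcl : ∀ C : Set X, IsClosed C → MeasurableSet (f '' C) := by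
    intro C hC
    have : C = ⋃ n, C ∩ compactCovering X n := by
      rw [← inter_iUnion, iUnion_compactCovering, inter_univ]
    rw [this, image_iUnion]
    exact MeasurableSet.iUnion fun n =>
      (((isCompact_compactCovering X n).inter_left hC).image hf).isClosed.measurableSet
  rw [BorelSpace.measurable_eq (α := X), borel_eq_generateFrom_isClosed] at hA
  induction A, hA using MeasurableSpace.generateFrom_induction with
  | hC t ht _ => exact hcl t ht
  | empty => simp
  | compl t _ ih =>
    rw [image_compl_eq_range_sdiff_image hinj, ← image_univ]
    exact (hcl _ isClosed_univ).diff ih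
  | iUnion t _ ih => rw [image_iUnion]; exact MeasurableSet.iUnion ih

section Final

variable {r s}
variable [TopologicalSpace V] [TopologicalSpace E]

/-- The scaling relation on cylinders whose first edges lie in an open set on which `s` is
injective. -/
lemma QuasiInv.Zn_eq {β : ℝ} {ν : Measure (BPath r s)}
    (hν : QuasiInv r s β ν) {n : ℕ} {U : Set E} (hU : IsOpen U) (hinj : InjOn s U)
    {A : Set (PathN r s (n + 1))} (hA : MeasurableSet A) (hAU : ∀ q ∈ A, q.1 0 ∈ U) :
    ν (Zn r s (n + 1) A) =
      ENNReal.ofReal (Real.exp (-β)) * ν (Zn r s n (sh r s '' A)) := by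
  rw [← shift_image_Zn]
  refine hν (Zn r s 1 {q | q.1 0 ∈ U}) (isOpen_Zn (hU.preimage (continuous_edge r s 0 0))) ?_ ?_
    _ ?_ (measurableSet_Zn hA)
  · rw [disjoint_left]
    rintro x ⟨h, -⟩ ⟨v, hv⟩
    rw [hv] at h
    exact absurd (Nat.cast_le.1 h) (by simp)
  · rintro x ⟨hx, hxU⟩ y ⟨hy, hyU⟩ hxy
    refine Subtype.ext (shiftC_inj hx hy (hinj hxU hyU ?_) hxy)
    have h1 := tp_shiftC hx
    have h2 := tp_shiftC hy
    exact h1.symm.trans ((tp_congr hxy 0 _ _).trans h2)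
  · exact (Zn_mono r s fun q hq => hAU q hq).trans
      (Zn_trunc_subset r s (show 1 ≤ n + 1 by omega) {q | q.1 0 ∈ U})

variable (r s) in
/-- The π-system of cylinders of Borel subsets of the spaces `E^n`. -/
def cylSets : Set (Set (BPath r s)) :=
  {C | ∃ (n : ℕ) (A : Set (PathN r s n)), MeasurableSet A ∧ C = Zn r s n A}

lemma isPiSystem_cylSets (hr : Continuous r) : IsPiSystem (cylSets r s) := by
  rintro _ ⟨m, A, hA, rfl⟩ _ ⟨n, B, hB, rfl⟩ -
  rcases le_total m n with h | h
  · exact ⟨n, _, ((continuous_truncFin hr h).measurable hA).inter hB, Zn_inter_le r s h A B⟩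
  · exact ⟨m, _, ((continuous_truncFin hr h).measurable hB).inter hA, by
      rw [inter_comm, Zn_inter_le r s h B A]⟩

variable [T2Space V] [T2Space E] [LocallyCompactSpace V] [LocallyCompactSpace E]
  [SecondCountableTopology V] [SecondCountableTopology E]

lemma measurableSet_sh_image (hr : Continuous r) (hs : Continuous s) {n : ℕ} {U : Set E}
    (hU : IsOpen U) (hinj : InjOn s U) {A : Set (PathN r s (n + 1))} (hA : MeasurableSet A)
    (hAU : ∀ q ∈ A, q.1 0 ∈ U) : MeasurableSet (sh r s '' A) := by
  have := lc_pathN (r := r) (s := s) hr hs (n + 1)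
  let O : Set (PathN r s (n + 1)) := {q | q.1 0 ∈ U}
  have hO : IsOpen O := hU.preimage (continuous_edge r s n 0)
  have : LocallyCompactSpace O := hO.locallyCompactSpace
  have hshinj : Function.Injective fun q : O => sh r s q.1 := by
    intro q q' h
    refine Subtype.ext (path_ext (hinj q.2 q'.2 ?_) h)
    exact (truncFin_zero_sh q.1).symm.trans ((congrArg _ h).trans (truncFin_zero_sh q'.1))
  have h := measurableSet_image_of_sigmaCompact (X := O)
    ((continuous_sh (r := r) hs).comp continuous_subtype_val) hshinj
    (hA.preimage measurable_subtype_coe)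
  convert h using 1
  ext p
  constructor
  · rintro ⟨q, hq, rfl⟩
    exact ⟨⟨q, hAU q hq⟩, hq, rfl⟩
  · rintro ⟨q, hq, rfl⟩
    exact ⟨q.1, hq, rfl⟩

/-- By induction on `n`, the measures of cylinders at level `n` are determined by those at
level `0`: the first edges are partitioned according to a countable cover of `E` by open sets on
which `s` is injective, and on each piece the shift lowers the level by one. -/
lemma measure_Zn_eq (hr : Continuous r) (hs : IsLocalHomeomorph s) {β : ℝ}
    {ν₁ ν₂ : Measure (BPath r s)} (hq₁ : QuasiInv r s β ν₁) (hq₂ : QuasiInv r s β ν₂)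
    (h0 : ∀ A : Set (PathN r s 0), MeasurableSet A → ν₁ (Zn r s 0 A) = ν₂ (Zn r s 0 A)) :
    ∀ (n : ℕ) (A : Set (PathN r s n)), MeasurableSet A →
      ν₁ (Zn r s n A) = ν₂ (Zn r s n A) := by
  intro n
  induction n with
  | zero => exact h0
  | succ n ih =>
    intro A hA
    choose f hf hfs using hs
    obtain ⟨T, hT, hTU⟩ := TopologicalSpace.countable_cover_nhds
      fun e : E => (f e).open_source.mem_nhds (hf e)
    rcases T.eq_empty_or_nonempty with rfl | hne
    · have : A = ∅ := eq_empty_of_forall_notMem fun q _ => by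
        have : q.1 0 ∈ (univ : Set E) := trivial
        simp [← hTU] at this
      rw [this, Zn_empty, measure_empty, measure_empty]
    obtain ⟨t, rfl⟩ := hT.exists_eq_range hne
    let U : ℕ → Set E := fun i => (f (t i)).source
    have hUo : ∀ i, IsOpen (U i) := fun i => (f (t i)).open_source
    have hUinj : ∀ i, InjOn s (U i) := fun i => by
      rw [hfs (t i)]
      exact (f (t i)).injOn
    have hUcov : ⋃ i, U i = univ := by simpa [U] using hTU
    let P : ℕ → Set (PathN r s (n + 1)) := fun i => (fun q => q.1 0) ⁻¹' U i
    have hP : ∀ i, MeasurableSet (P i) := fun i =>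
      ((hUo i).preimage (continuous_edge r s n 0)).measurableSet
    let B : ℕ → Set (PathN r s (n + 1)) := fun i => A ∩ disjointed P i
    have hB : ∀ i, MeasurableSet (B i) := fun i => hA.inter (MeasurableSet.disjointed hP i)
    have hBU : ∀ i, ∀ q ∈ B i, q.1 0 ∈ U i := fun i q hq => disjointed_subset P i hq.2
    have hAB : A = ⋃ i, B i := by
      rw [← inter_iUnion, iUnion_disjointed, ← preimage_iUnion, hUcov, preimage_univ,
        inter_univ]
    have hdisj : Pairwise (Function.onFun Disjoint fun i => Zn r s (n + 1) (B i)) := by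
      intro i j hij
      rw [Function.onFun, disjoint_iff_inter_eq_empty, ← Zn_inter,
        (((disjoint_disjointed P) hij).mono inter_subset_right inter_subset_right).inter_eq,
        Zn_empty]
    rw [hAB, Zn_iUnion, measure_iUnion hdisj fun i => measurableSet_Zn (hB i),
      measure_iUnion hdisj fun i => measurableSet_Zn (hB i)]
    refine tsum_congr fun i => ?_
    have hsc : Continuous s := continuous_iff_continuousAt.2 fun e => by
      rw [hfs e]
      exact (f e).continuousAt (hf e)
    rw [hq₁.Zn_eq (hUo i) (hUinj i) (hB i) (hBU i),
      hq₂.Zn_eq (hUo i) (hUinj i) (hB i) (hBU i),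
      ih _ (measurableSet_sh_image hr hsc (hUo i) (hUinj i) (hB i) (hBU i))]

lemma generateFrom_cylSets (hr : Continuous r) (hs : Continuous s) :
    instMeasBPath r s = MeasurableSpace.generateFrom (cylSets r s) := by
  apply le_antisymm
  · have := sc_bpath (r := r) (s := s) hr hs
    have hZ : ∀ (n : ℕ) (A : Set (PathN r s n)), MeasurableSet A →
        MeasurableSet[MeasurableSpace.generateFrom (cylSets r s)] (Zn r s n A) :=
      fun n A hA => MeasurableSpace.measurableSet_generateFrom ⟨n, A, hA, rfl⟩
    rw [show instMeasBPath r s = _ from borel_eq_generateFrom_of_subbasis rfl]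
    refine MeasurableSpace.generateFrom_le ?_
    rintro _ ⟨U, K, hU, hK, rfl⟩
    refine MeasurableSet.diff ?_ ?_
    · rw [ZSet_eq]
      exact MeasurableSet.iUnion fun n => hZ n _ (isOpen_sigma_iff.1 hU n).measurableSet
    · obtain ⟨S, t, _, ht, h⟩ := ZSet_compact hK
      rw [h]
      exact MeasurableSet.biUnion S.to_countable fun n _ =>
        hZ n _ (ht n).isClosed.measurableSet
  · refine MeasurableSpace.generateFrom_le ?_
    rintro _ ⟨n, A, hA, rfl⟩
    exact measurableSet_Zn hA

end Final

/-- the pushforward along the range map `r : ∂E → E⁰` is injective on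
`β`-quasi-invariant regular Borel measures on `∂E`. -/
theorem stmt15 {V E : Type u} (r s : E → V) [TopologicalSpace V] [TopologicalSpace E]
    [T2Space V] [T2Space E] [LocallyCompactSpace V] [LocallyCompactSpace E]
    [SecondCountableTopology V] [SecondCountableTopology E]
    [MeasurableSpace V] [BorelSpace V] [MeasurableSpace E] [BorelSpace E]
    (hr : Continuous r) (hs : IsLocalHomeomorph s) (β : ℝ)
    (ν₁ ν₂ : Measure (BPath r s)) (h₁ : ν₁.Regular) (h₂ : ν₂.Regular)
    (hq₁ : QuasiInv r s β ν₁) (hq₂ : QuasiInv r s β ν₂)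
    (h : Measure.map (brng r s) ν₁ = Measure.map (brng r s) ν₂) :
    ν₁ = ν₂ := by
  have hsc : Continuous s := hs.continuous
  have h0 : ∀ A : Set (PathN r s 0), MeasurableSet A →
      ν₁ (Zn r s 0 A) = ν₂ (Zn r s 0 A) := by
    intro A hA
    have hA' : MeasurableSet (α := V) A := by
      have hV := BorelSpace.measurable_eq (α := V)
      rw [hV]
      exact hA
    have hb : Measurable (brng r s) := continuous_brng.measurable
    have hAν := DFunLike.congr_fun h (show Set V from A)
    rw [Measure.map_apply hb hA', Measure.map_apply hb hA'] at hAν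
    have hp : brng r s ⁻¹' (show Set V from A) = Zn r s 0 A := brng_preimage _
    exact (congrArg ν₁ hp).symm.trans (hAν.trans (congrArg ν₂ hp))
  refine Measure.ext_of_generateFrom_of_iUnion (cylSets r s)
    (fun i => Zn r s 0 (compactCovering V i)) (generateFrom_cylSets hr hsc)
    (isPiSystem_cylSets hr) ?_ ?_ ?_ ?_
  · exact (Zn_iUnion r s 0 _).symm.trans
      ((congrArg _ (iUnion_compactCovering V)).trans (Zn_zero_univ r s))
  · intro i
    exact ⟨0, _, (show IsCompact (X := PathN r s 0) _ from
      isCompact_compactCovering V i).isClosed.measurableSet, rfl⟩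
  · intro i
    exact (isCompact_Zn_zero hr hsc (isCompact_compactCovering V i)).measure_lt_top.ne
  · rintro _ ⟨n, A, hA, rfl⟩
    exact measure_Zn_eq hr hs hq₁ hq₂ h0 n A hA

end TopGraph
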